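/- Let R be a commutative ring. The maps Loc({R_f : f ∈ J}) ↦ √⟨J⟩ (the radical of the ideal generated by J) and I ↦ Loc({R_f : f ∈ I}) are mutually inverse, inclusion-preserving order isomorphisms between the poset of localizing subcategories of D(R) generated by sets of localizations of R and the frame of radical ideals of R. Moreover, this isomorphism restricts to an isomorphism of distributive lattices between the localizing subcategories generated by finitely many localizations of R and the lattice of radicals of finitely generated ideals of R. -/

import Mathlib

open CategoryTheory CategoryTheory.Limits CategoryTheory.Pretriangulated ZeroObject

universe w w' v u

section TriangulatedDefs

variable {T : Type u} [Category.{v} T] [Preadditive T] [HasZeroObject T]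
  [HasShift T ℤ] [∀ n : ℤ, (shiftFunctor T n).Additive] [Pretriangulated T]

/-- A localizing subcategory of a (pre)triangulated category, encoded as a set of
objects: it is closed under isomorphisms, contains the zero object, is stable
under shifts, closed under cones of distinguished triangles (hence a full
triangulated subcategory), and closed under arbitrary small coproducts
(phrased via colimit cofans, so that no global existence of coproducts
is needed). -/
structure IsLocalizingSub (S : Set T) : Prop where
  zero_mem : (0 : T) ∈ S
  mem_of_iso : ∀ {x y : T}, (x ≅ y) → x ∈ S → y ∈ S
  shift_mem : ∀ (n : ℤ) {x : T}, x ∈ S → x⟦n⟧ ∈ S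
  cone_mem : ∀ (Tr : Triangle T), Tr ∈ distinguishedTriangles →
    Tr.obj₁ ∈ S → Tr.obj₂ ∈ S → Tr.obj₃ ∈ S
  coprod_mem : ∀ {ι : Type w} (f : ι → T) (c : Cofan f), IsColimit c →
    (∀ i, f i ∈ S) → c.pt ∈ S

/-- A colocalizing subcategory: as `IsLocalizingSub` but with products instead
of coproducts. -/
structure IsColocalizingSub (S : Set T) : Prop where
  zero_mem : (0 : T) ∈ S
  mem_of_iso : ∀ {x y : T}, (x ≅ y) → x ∈ S → y ∈ S
  shift_mem : ∀ (n : ℤ) {x : T}, x ∈ S → x⟦n⟧ ∈ S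
  cone_mem : ∀ (Tr : Triangle T), Tr ∈ distinguishedTriangles →
    Tr.obj₁ ∈ S → Tr.obj₂ ∈ S → Tr.obj₃ ∈ S
  prod_mem : ∀ {ι : Type w} (f : ι → T) (c : Fan f), IsLimit c →
    (∀ i, f i ∈ S) → c.pt ∈ S

/-- `Loc S`: the smallest localizing subcategory containing the set of
objects `S` (the intersection of all localizing subcategories containing it). -/
def Loc (S : Set T) : Set T :=
  ⋂₀ {L : Set T | IsLocalizingSub.{w} L ∧ S ⊆ L}

/-- The right orthogonal of a set of objects. -/
def rightOrth (C : Set T) : Set T :=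
  {x : T | ∀ ⦃c : T⦄, c ∈ C → ∀ (g : c ⟶ x), g = 0}

end TriangulatedDefs

section CompactDefs

variable {T : Type u} [Category.{v} T] [Preadditive T]

/-- The canonical comparison map `⨁ᵢ Hom(x, fᵢ) →+ Hom(x, ∐ f)` associated to a
cofan `c` on a family `f`. -/
noncomputable def cofanHomComparison {ι : Type w} (x : T) (f : ι → T) (c : Cofan f) :
    (Π₀ i, (x ⟶ f i)) →+ (x ⟶ c.pt) :=
  letI := Classical.decEq ι
  DFinsupp.sumAddHom (fun i => AddMonoidHom.mk' (fun φ => φ ≫ c.inj i)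
    (fun φ ψ => Preadditive.add_comp _ _ _ φ ψ (c.inj i)))

/-- An object `x` is compact if `Hom(x, -)` commutes with arbitrary small
coproducts, i.e. for every colimit cofan on a family `f`, the canonical map
`⨁ᵢ Hom(x, fᵢ) → Hom(x, ∐ f)` is bijective. -/
def IsCompactObj (x : T) : Prop :=
  ∀ ⦃ι : Type w⦄ (f : ι → T) (c : Cofan f), IsColimit c →
    Function.Bijective (cofanHomComparison x f c)

end CompactDefs

section DR

variable (R : Type u) [CommRing R] [HasDerivedCategory.{w'} (ModuleCat.{u} R)]

/-- The `R`-module `M`, regarded as an object of the derived category `D(R)`,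
as a complex concentrated in degree `0`. -/
noncomputable def smod (M : ModuleCat.{u} R) : DerivedCategory (ModuleCat.{u} R) :=
  (DerivedCategory.singleFunctor (ModuleCat.{u} R) 0).obj M

end DR
section Statement15

variable (R : Type u) [CommRing R] [HasDerivedCategory.{w'} (ModuleCat.{u} R)]

/-- The localizing subcategory of `D(R)` generated by the localizations `R_f`
for `f` in a subset `S ⊆ R`. -/
noncomputable def locS (S : Set R) : Set (DerivedCategory (ModuleCat.{u} R)) :=
  Loc.{u} {x | ∃ f ∈ S, x = smod R (ModuleCat.of R (Localization.Away f))}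

end Statement15

/-!
For a localizing subcategory `L` of `D(R)`, the set `{f | R_f ∈ L}` is a radical ideal. It is closed
under multiples because a localization `A_r` is the cokernel of the injective multiplication by
`r X - 1` on `A[X]`, and `A[X]` is a coproduct of copies of `A`. It is closed under sums because
over `A = R_{f+g}` the elements `f` and `g` are coprime, so that the Mayer–Vietoris sequence
`0 → A → A_f × A_g → A_{fg} → 0` is exact.

Conversely, if `R_f ∈ Loc {R_g : g ∈ S}`, consider the quotient map `R_f → R_f / S R_f`. Its target
is annihilated by `S`, while each `g ∈ S` acts invertibly on `R_g`, so every shift of the target is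
right orthogonal to all `R_g`, hence to the localizing subcategory they generate. The quotient map
therefore vanishes in `D(R)`, hence in `R`-modules, which means that some power of `f` lies in
`⟨S⟩`.
-/

section QuasiIsoColimits

open HomologicalComplex

variable {C : Type*} [Category* C] [Abelian C] {J : Type*} [Category* J]
  {ι : Type*} {c : ComplexShape ι}

/-- A diagram of complexes, regarded as a complex of diagrams. -/
abbrev complexOfDiagram (F : J ⥤ HomologicalComplex C c) : HomologicalComplex (J ⥤ C) c where
  X i := F ⋙ eval C c i
  d i j :=
    { app t := (F.obj t).d i j
      naturality _ _ φ := (F.map φ).comm i j }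
  shape i j hij := by ext t; exact (F.obj t).shape i j hij
  d_comp_d' i j k _ _ := by ext t; exact (F.obj t).d_comp_d i j k

/-- The morphism of complexes of diagrams attached to a morphism of diagrams of complexes. -/
abbrev complexOfDiagramMap {F G : J ⥤ HomologicalComplex C c} (φ : F ⟶ G) :
    complexOfDiagram F ⟶ complexOfDiagram G where
  f i := Functor.whiskerRight φ (eval C c i)
  comm' i j _ := by ext t; exact (φ.app t).comm i j

variable [HasColimitsOfShape J C] {F : J ⥤ HomologicalComplex C c} {s : Cocone F}

/-- Colimits of complexes are computed degreewise. -/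
noncomputable def colimitEvalIso (hs : IsColimit s) (i : ι) :
    colimit (F ⋙ eval C c i) ≅ s.pt.X i :=
  (colimit.isColimit _).coconePointUniqueUpToIso (isColimitOfPreserves (eval C c i) hs)

lemma ι_colimitEvalIso_hom (hs : IsColimit s) (i : ι) (j : J) :
    colimit.ι (F ⋙ eval C c i) j ≫ (colimitEvalIso hs i).hom = (s.ι.app j).f i :=
  (colimit.isColimit _).comp_coconePointUniqueUpToIso_hom _ j

/-- The degreewise colimit of a diagram of complexes is its colimit. -/
noncomputable def colimComplexOfDiagramIso (hs : IsColimit s) :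
    (colim.mapHomologicalComplex c).obj (complexOfDiagram F) ≅ s.pt :=
  HomologicalComplex.Hom.isoOfComponents (fun i => colimitEvalIso hs i)
    (fun i j _ => colimit.hom_ext fun t => by
      change colimit.ι (F ⋙ eval C c i) t ≫ (colimitEvalIso hs i).hom ≫ s.pt.d i j =
        colimit.ι (F ⋙ eval C c i) t ≫ colimMap ((complexOfDiagram F).d i j) ≫
          (colimitEvalIso hs j).hom
      rw [reassoc_of% ι_colimitEvalIso_hom hs i t, ι_colimMap_assoc, ι_colimitEvalIso_hom]
      exact (s.ι.app t).comm i j)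

instance quasiIso_isStableUnderColimitsOfShape [HasExactColimitsOfShape J C] :
    (HomologicalComplex.quasiIso C c).IsStableUnderColimitsOfShape J where
  condition F G s t hs ht f hf φ hφ := by
    have : QuasiIso (complexOfDiagramMap f) := (HomologicalComplex.quasiIso_iff_evaluation _).2 hf
    have h : QuasiIso ((colim.mapHomologicalComplex c).map (complexOfDiagramMap f)) := inferInstance
    have w : (colimComplexOfDiagramIso hs).hom ≫ φ =
        (colim.mapHomologicalComplex c).map (complexOfDiagramMap f) ≫
          (colimComplexOfDiagramIso ht).hom := by
      ext i
      refine colimit.hom_ext (fun j => ?_)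
      change colimit.ι (F ⋙ eval C c i) j ≫ (colimitEvalIso hs i).hom ≫ φ.f i =
        colimit.ι (F ⋙ eval C c i) j ≫ colimMap (Functor.whiskerRight f (eval C c i)) ≫
          (colimitEvalIso ht i).hom
      rw [reassoc_of% ι_colimitEvalIso_hom hs i j, ι_colimMap_assoc, ι_colimitEvalIso_hom]
      exact HomologicalComplex.congr_hom (hφ j) i
    exact ((HomologicalComplex.quasiIso C c).arrow_mk_iso_iff (Arrow.isoMk _ _ w)).1 h

end QuasiIsoColimits

section DerivedCoproducts

open DerivedCategory

variable {C : Type u} [Category.{v} C] [Abelian C] [HasDerivedCategory.{w} C]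

lemma exists_quasiIso_comp_homotopy_zero {K L : CochainComplex C ℤ} (f : K ⟶ L)
    (hf : Q.map f = 0) :
    ∃ (K' : CochainComplex C ℤ) (t : K' ⟶ K), QuasiIso t ∧ Nonempty (Homotopy (t ≫ f) 0) := by
  have hf' : Qh.map ((HomotopyCategory.quotient C _).map f) =
      Qh.map ((HomotopyCategory.quotient C _).map 0) := by
    rw [Functor.map_zero, Functor.map_zero]
    exact hf
  obtain ⟨K', t, ht, h⟩ := (MorphismProperty.map_eq_iff_precomp Qh
    (HomotopyCategory.quasiIso C _) _ _).1 hf'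
  obtain ⟨K', rfl⟩ := HomotopyCategory.quotient_obj_surjective K'
  obtain ⟨t, rfl⟩ := (HomotopyCategory.quotient _ _).map_surjective t
  refine ⟨K', t, ?_, ⟨HomotopyCategory.homotopyOfEq _ _ ?_⟩⟩
  · rw [← isIso_Q_map_iff_quasiIso]
    exact (isIso_Qh_map_iff _).2 ht
  · simpa using h

lemma quasiIso_zero_of_homotopy_id_zero {E : CochainComplex C ℤ} (h : Homotopy (𝟙 E) 0) :
    QuasiIso (0 : E ⟶ E) := by
  rw [← isIso_Q_map_iff_quasiIso, ← Q_map_eq_of_homotopy _ h]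
  infer_instance

variable {J : Type*} [HasColimitsOfShape (Discrete J) C] [HasExactColimitsOfShape (Discrete J) C]

lemma isIso_Q_map_sigmaMap {X Y : J → CochainComplex C ℤ} (s : ∀ j, X j ⟶ Y j)
    (hs : ∀ j, QuasiIso (s j)) : IsIso (Q.map (Limits.Sigma.map s)) := by
  rw [isIso_Q_map_iff_quasiIso]
  exact MorphismProperty.colimMap (W := HomologicalComplex.quasiIso C _) _ fun ⟨j⟩ => hs j

lemma Q_map_eq_zero_of_forall_homotopy_id_zero {E : J → CochainComplex C ℤ}
    (hE : ∀ j, Homotopy (𝟙 (E j)) 0) {L : CochainComplex C ℤ} (g : ∐ E ⟶ L) : Q.map g = 0 := by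
  have := isIso_Q_map_sigmaMap _ fun j => quasiIso_zero_of_homotopy_id_zero (hE j)
  have h0 : Limits.Sigma.map (fun j => (0 : E j ⟶ E j)) = 0 := Sigma.hom_ext _ _ (by simp)
  rw [← cancel_epi (Q.map (Limits.Sigma.map fun j => (0 : E j ⟶ E j))), h0,
    Functor.map_zero, zero_comp, zero_comp]

-- A null-homotopy of `Sigma.ι X j ≫ g` is an extension of it to the contractible complex
-- `mappingCone (𝟙 (X j))`, so `g` factors through a coproduct of contractible complexes.
lemma Q_map_eq_zero_of_forall_homotopy {X : J → CochainComplex C ℤ} {L : CochainComplex C ℤ}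
    (g : ∐ X ⟶ L) (h : ∀ j, Nonempty (Homotopy (Sigma.ι X j ≫ g) 0)) : Q.map g = 0 := by
  let a (j : J) : CochainComplex.mappingCone (𝟙 (X j)) ⟶ L :=
    HomologicalComplex.homotopyCofiber.desc _ (Sigma.ι X j ≫ g)
      ((Homotopy.ofEq (Category.id_comp _)).trans (h j).some)
  have hg : g = Limits.Sigma.map (fun j => CochainComplex.mappingCone.inr (𝟙 (X j))) ≫
      Sigma.desc a := Sigma.hom_ext _ _ fun j => by
    rw [Sigma.ι_map_assoc, Sigma.ι_desc]
    exact (HomologicalComplex.homotopyCofiber.inr_desc _ _ _).symm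
  rw [hg, Functor.map_comp, Q_map_eq_zero_of_forall_homotopy_id_zero
    (fun j => CochainComplex.mappingCone.homotopyToZeroOfId (X j)) (Sigma.desc a), comp_zero]

lemma Q_map_eq_zero_of_forall_ι {X : J → CochainComplex C ℤ} {L : CochainComplex C ℤ}
    (g : ∐ X ⟶ L) (h : ∀ j, Q.map (Sigma.ι X j) ≫ Q.map g = 0) : Q.map g = 0 := by
  choose X' t ht H using fun j =>
    exists_quasiIso_comp_homotopy_zero (Sigma.ι X j ≫ g) (by rw [Functor.map_comp, h])
  have := isIso_Q_map_sigmaMap t ht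
  rw [← cancel_epi (Q.map (Limits.Sigma.map t)), comp_zero, ← Functor.map_comp]
  exact Q_map_eq_zero_of_forall_homotopy _ fun j => by simpa using H j

lemma exists_Q_map_ι_comp_eq {X : J → CochainComplex C ℤ} {Y : DerivedCategory C}
    (f : ∀ j, Q.obj (X j) ⟶ Y) : ∃ φ : Q.obj (∐ X) ⟶ Y, ∀ j, Q.map (Sigma.ι X j) ≫ φ = f j := by
  let e := Q.objObjPreimageIso Y
  choose X' s hs g hg using fun j => right_fac (f j ≫ e.inv)
  have := isIso_Q_map_sigmaMap s fun j => (isIso_Q_map_iff_quasiIso _ (s j)).1 (hs j)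
  refine ⟨inv (Q.map (Limits.Sigma.map s)) ≫ Q.map (Sigma.desc g) ≫ e.hom, fun j => ?_⟩
  rw [← cancel_mono e.inv, hg]
  simp only [Category.assoc, e.hom_inv_id, Category.comp_id]
  rw [IsIso.eq_inv_comp, ← Functor.map_comp_assoc, ← Sigma.ι_map, Functor.map_comp_assoc,
    IsIso.hom_inv_id_assoc, ← Functor.map_comp, Sigma.ι_desc]

lemma eq_zero_of_forall_Q_map_ι_comp_eq_zero {X : J → CochainComplex C ℤ} {Y : DerivedCategory C}
    (φ : Q.obj (∐ X) ⟶ Y) (h : ∀ j, Q.map (Sigma.ι X j) ≫ φ = 0) : φ = 0 := by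
  let e := Q.objObjPreimageIso Y
  obtain ⟨Y', g, s, hs, hg⟩ := left_fac (φ ≫ e.inv)
  rw [← cancel_mono e.inv, zero_comp, hg, Q_map_eq_zero_of_forall_ι g, zero_comp]
  intro j
  rw [← cancel_mono (inv (Q.map s)), Category.assoc, ← hg, reassoc_of% h j, zero_comp, zero_comp]

instance preservesColimitsOfShape_discrete_Q :
    PreservesColimitsOfShape (Discrete J) (Q (C := C)) := by
  have (X : J → CochainComplex C ℤ) : PreservesColimit (Discrete.functor X) (Q (C := C)) := by
    choose desc fac using fun t : Cofan fun j => Q.obj (X j) => exists_Q_map_ι_comp_eq t.inj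
    refine preservesColimit_of_preserves_colimit_cocone (coproductIsCoproduct X)
      ((isColimitMapCoconeCofanMkEquiv _ _ _).symm (Cofan.IsColimit.mk _ desc fac fun t m hm => ?_))
    refine sub_eq_zero.1 (eq_zero_of_forall_Q_map_ι_comp_eq_zero _ fun j => ?_)
    rw [Preadditive.comp_sub, fac, sub_eq_zero]
    exact hm j
  exact preservesColimitsOfShape_of_discrete _

instance preservesColimitsOfShape_discrete_singleFunctor (n : ℤ) :
    PreservesColimitsOfShape (Discrete J) (singleFunctor C n) :=
  have : PreservesColimitsOfShape (Discrete J) (CochainComplex.singleFunctor C n) :=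
    inferInstanceAs (PreservesColimitsOfShape _ (HomologicalComplex.single C _ n))
  preservesColimitsOfShape_of_natIso (singleFunctorIsoCompQ C n).symm

end DerivedCoproducts

section MayerVietoris

variable {A B C D : Type*} [CommRing A] [CommRing B] [CommRing C] [CommRing D]
  [Algebra A B] [Algebra A C] [Algebra A D] {x y : A} [IsLocalization.Away (x * y) D]
  (b : B →ₐ[A] D) (c : C →ₐ[A] D)

lemma exists_pow_mul_eq_of_algHom_eq {p : B} {q : C} (hpq : b p = c q) {n m : ℕ} {r s : A}
    (hr : p * algebraMap A B x ^ n = algebraMap A B r)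
    (hs : q * algebraMap A C y ^ m = algebraMap A C s) :
    ∃ k : ℕ, (x * y) ^ k * (y ^ m * r) = (x * y) ^ k * (x ^ n * s) := by
  have hr' := congrArg b hr
  have hs' := congrArg c hs
  simp only [map_mul, map_pow, AlgHom.commutes] at hr' hs'
  have h : algebraMap A D (y ^ m * r) = algebraMap A D (x ^ n * s) := by
    simp only [map_mul, map_pow]
    rw [← hr', ← hs', hpq]
    ring
  obtain ⟨⟨_, k, rfl⟩, hk⟩ := (IsLocalization.eq_iff_exists (Submonoid.powers (x * y)) D).1 h
  exact ⟨k, hk⟩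

variable [IsLocalization.Away x B] [IsLocalization.Away y C]

variable (B C) in
lemma injective_algebraMap_prod_of_isCoprime (hxy : IsCoprime x y) :
    Function.Injective ((Algebra.linearMap A B).prod (Algebra.linearMap A C)) := by
  rw [injective_iff_map_eq_zero]
  intro a ha
  obtain ⟨haB, haC⟩ := Prod.mk_eq_zero.1 ha
  obtain ⟨⟨_, n, rfl⟩, hn : x ^ n * a = 0⟩ :=
    (IsLocalization.map_eq_zero_iff (Submonoid.powers x) B a).1 haB
  obtain ⟨⟨_, m, rfl⟩, hm : y ^ m * a = 0⟩ :=
    (IsLocalization.map_eq_zero_iff (Submonoid.powers y) C a).1 haC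
  obtain ⟨u, v, huv⟩ := hxy.pow (m := n) (n := m)
  linear_combination (-a) * huv + u * hn + v * hm

lemma surjective_algHom_coprod_of_isCoprime (hxy : IsCoprime x y) :
    Function.Surjective (b.toLinearMap.coprod (-c.toLinearMap)) := fun d => by
  obtain ⟨n, r, hr⟩ := IsLocalization.Away.surj (x * y) d
  obtain ⟨u, v, huv⟩ := hxy.pow (m := n) (n := n)
  obtain ⟨s, hs⟩ := ((IsLocalization.Away.algebraMap_isUnit (S := B) x).pow n).exists_right_inv
  obtain ⟨t, ht⟩ := ((IsLocalization.Away.algebraMap_isUnit (S := C) y).pow n).exists_right_inv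
  refine ⟨(algebraMap A B (r * v) * s, -(algebraMap A C (r * u) * t)), ?_⟩
  have hs' := congrArg b hs
  have ht' := congrArg c ht
  have huv' := congrArg (algebraMap A D) huv
  apply ((IsLocalization.Away.algebraMap_isUnit (S := D) (x * y)).pow n).mul_left_cancel
  simp only [LinearMap.coprod_apply, LinearMap.neg_apply, AlgHom.toLinearMap_apply, map_mul,
    map_pow, map_one, map_neg, map_add, AlgHom.commutes] at hr hs' ht' huv' ⊢
  linear_combination
    (algebraMap A D y ^ n * algebraMap A D r * algebraMap A D v) * hs' +
      (algebraMap A D x ^ n * algebraMap A D r * algebraMap A D u) * ht' +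
      algebraMap A D r * huv' - hr

lemma exists_algebraMap_eq_of_isCoprime (hxy : IsCoprime x y) {p : B} {q : C} (hpq : b p = c q) :
    ∃ a, algebraMap A B a = p ∧ algebraMap A C a = q := by
  obtain ⟨n, r, hr⟩ := IsLocalization.Away.surj x p
  obtain ⟨m, s, hs⟩ := IsLocalization.Away.surj y q
  obtain ⟨k, hk⟩ := exists_pow_mul_eq_of_algHom_eq b c hpq hr hs
  obtain ⟨u, v, huv⟩ := hxy.pow (m := n + k) (n := m + k)
  refine ⟨u * x ^ k * r + v * y ^ k * s, ?_, ?_⟩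
  · apply ((IsLocalization.Away.algebraMap_isUnit (S := B) x).pow (n + k)).mul_left_cancel
    have hkB := congrArg (algebraMap A B) hk
    have huvB := congrArg (algebraMap A B) huv
    simp only [map_mul, map_pow, map_add, map_one] at hkB huvB ⊢
    linear_combination (-algebraMap A B v) * hkB +
      (algebraMap A B x ^ k * algebraMap A B r) * huvB - algebraMap A B x ^ k * hr
  · apply ((IsLocalization.Away.algebraMap_isUnit (S := C) y).pow (m + k)).mul_left_cancel
    have hkC := congrArg (algebraMap A C) hk
    have huvC := congrArg (algebraMap A C) huv
    simp only [map_mul, map_pow, map_add, map_one] at hkC huvC ⊢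
    linear_combination (algebraMap A C u) * hkC +
      (algebraMap A C y ^ k * algebraMap A C s) * huvC - algebraMap A C y ^ k * hs

lemma exact_algebraMap_prod_algHom_coprod_of_isCoprime (hxy : IsCoprime x y) :
    Function.Exact ((Algebra.linearMap A B).prod (Algebra.linearMap A C))
      (b.toLinearMap.coprod (-c.toLinearMap)) := by
  rintro ⟨p, q⟩
  constructor
  · intro h
    have hpq : b p = c q := by simpa [← sub_eq_add_neg, sub_eq_zero] using h
    obtain ⟨a, rfl, rfl⟩ := exists_algebraMap_eq_of_isCoprime b c hxy hpq
    exact ⟨a, rfl⟩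
  · rintro ⟨a, ha⟩
    obtain ⟨rfl, rfl⟩ := Prod.mk.inj ha
    simp

end MayerVietoris

section LocalizingSubcategories

variable {T : Type u} [Category.{v} T] [Preadditive T] [HasZeroObject T]
  [HasShift T ℤ] [∀ n : ℤ, (shiftFunctor T n).Additive] [Pretriangulated T]

lemma subset_Loc (S : Set T) : S ⊆ Loc.{w} S :=
  Set.subset_sInter fun _ hL => hL.2

lemma isLocalizingSub_Loc (S : Set T) : IsLocalizingSub.{w} (Loc.{w} S) where
  zero_mem _ hL := hL.1.zero_mem
  mem_of_iso e hx _ hL := hL.1.mem_of_iso e (hx _ hL)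
  shift_mem n _ hx _ hL := hL.1.shift_mem n (hx _ hL)
  cone_mem Tr hTr h₁ h₂ _ hL := hL.1.cone_mem Tr hTr (h₁ _ hL) (h₂ _ hL)
  coprod_mem f c hc h _ hL := hL.1.coprod_mem f c hc fun i => h i _ hL

lemma isLocalizingSub_leftOrthogonal (P : ObjectProperty T) [P.IsStableUnderShift ℤ] :
    IsLocalizingSub.{w} {X | P.leftOrthogonal X} where
  zero_mem := P.leftOrthogonal.prop_zero
  mem_of_iso e hx := P.leftOrthogonal.prop_of_iso e hx
  shift_mem n _ hx := P.leftOrthogonal.le_shift n _ hx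
  cone_mem Tr hTr h₁ h₂ := P.leftOrthogonal.ext_of_isTriangulatedClosed₃ Tr hTr h₁ h₂
  coprod_mem f c hc h Y φ hY :=
    Cofan.IsColimit.hom_ext hc _ _ fun i => by rw [h i (c.inj i ≫ φ) hY, comp_zero]

namespace IsLocalizingSub

variable {L : Set T} (hL : IsLocalizingSub.{w} L)
include hL

lemma Loc_subset_iff {S : Set T} : Loc.{w} S ⊆ L ↔ S ⊆ L :=
  ⟨(subset_Loc S).trans, fun h => Set.sInter_subset_of_mem ⟨hL, h⟩⟩

lemma mem_of_isZero {X : T} (hX : IsZero X) : X ∈ L :=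
  hL.mem_of_iso ((isZero_zero T).iso hX) hL.zero_mem

lemma obj₁_mem (Tr : Triangle T) (hTr : Tr ∈ distinguishedTriangles)
    (h₂ : Tr.obj₂ ∈ L) (h₃ : Tr.obj₃ ∈ L) : Tr.obj₁ ∈ L :=
  hL.mem_of_iso ((shiftEquiv T (1 : ℤ)).unitIso.symm.app Tr.obj₁)
    (hL.shift_mem (-1) (hL.cone_mem _ (rot_of_distTriang Tr hTr) h₂ h₃))

lemma obj₂_mem (Tr : Triangle T) (hTr : Tr ∈ distinguishedTriangles)
    (h₁ : Tr.obj₁ ∈ L) (h₃ : Tr.obj₃ ∈ L) : Tr.obj₂ ∈ L :=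
  hL.obj₁_mem _ (rot_of_distTriang Tr hTr) h₃ (hL.shift_mem 1 h₁)

end IsLocalizingSub

end LocalizingSubcategories

section LinearCategories

variable {R : Type*} [CommRing R] {T : Type*} [Category* T] [Preadditive T] [Linear R T]

lemma eq_zero_of_isIso_smul_id {X Y : T} (r : R) [IsIso (r • 𝟙 X)] (hY : r • 𝟙 Y = 0)
    (φ : X ⟶ Y) : φ = 0 := by
  rw [← cancel_epi (r • 𝟙 X), Linear.smul_comp, Category.id_comp, comp_zero,
    ← Category.comp_id φ, ← Linear.comp_smul, hY, comp_zero]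

variable (T) in
/-- The objects of an `R`-linear category annihilated by every element of `S`. -/
def annihilatedBy (S : Set R) : ObjectProperty T := fun Y => ∀ r ∈ S, r • 𝟙 Y = 0

lemma annihilatedBy.map {S : Set R} {Y : T} (hY : annihilatedBy T S Y)
    {T' : Type*} [Category* T'] [Preadditive T'] [Linear R T'] (F : T ⥤ T') [F.Additive]
    [F.Linear R] : annihilatedBy T' S (F.obj Y) := fun r hr => by
  rw [← F.map_id, ← F.map_smul, hY r hr, F.map_zero]

lemma annihilatedBy_quotient_map_span (S : Set R) (A : Type v) [CommRing A] [Algebra R A] :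
    annihilatedBy (ModuleCat.{v} R) S (.of R (A ⧸ (Ideal.span S).map (algebraMap R A))) := by
  intro r hr
  refine ModuleCat.hom_ext (LinearMap.ext fun a => ?_)
  have hr₀ : algebraMap R (A ⧸ (Ideal.span S).map (algebraMap R A)) r = 0 :=
    Ideal.Quotient.eq_zero_iff_mem.2 (Ideal.mem_map_of_mem _ (Ideal.subset_span hr))
  exact (Algebra.smul_def r a).trans ((congrArg (· * a) hr₀).trans (zero_mul a))

instance annihilatedBy_isStableUnderShift [HasShift T ℤ] [∀ n : ℤ, (shiftFunctor T n).Additive]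
    [∀ n : ℤ, (shiftFunctor T n).Linear R] (S : Set R) :
    (annihilatedBy T S).IsStableUnderShift ℤ where
  isStableUnderShiftBy n := ⟨fun _ hY => hY.map (shiftFunctor T n)⟩

end LinearCategories

namespace IsLocalizingSub

open DerivedCategory

variable {R : Type u} [CommRing R] [HasDerivedCategory.{w'} (ModuleCat.{u} R)]
  {L : Set (DerivedCategory (ModuleCat.{u} R))} (hL : IsLocalizingSub.{u} L)
include hL

section Modules

variable {M N P : Type u} [AddCommGroup M] [AddCommGroup N] [AddCommGroup P]
  [Module R M] [Module R N] [Module R P]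

lemma smod_mem_of_subsingleton [Subsingleton M] : smod R (.of R M) ∈ L :=
  hL.mem_of_isZero ((singleFunctor _ 0).map_isZero (ModuleCat.isZero_of_subsingleton _))

lemma smod_mem_of_linearEquiv (e : M ≃ₗ[R] N) (hM : smod R (.of R M) ∈ L) :
    smod R (.of R N) ∈ L :=
  hL.mem_of_iso ((singleFunctor _ 0).mapIso e.toModuleIso) hM

variable {f : M →ₗ[R] N} {g : N →ₗ[R] P} (hf : Function.Injective f) (hfg : Function.Exact f g)
  (hg : Function.Surjective g)
include hf hfg hg

lemma smod_mem_of_exact₁ (hN : smod R (.of R N) ∈ L) (hP : smod R (.of R P) ∈ L) :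
    smod R (.of R M) ∈ L :=
  hL.obj₁_mem _ (ModuleCat.shortComplex_shortExact
    (ModuleCat.shortComplexOfCompEqZero f g hfg.linearMap_comp_eq_zero)
    hfg hf hg).singleTriangle_distinguished hN hP

lemma smod_mem_of_exact₂ (hM : smod R (.of R M) ∈ L) (hP : smod R (.of R P) ∈ L) :
    smod R (.of R N) ∈ L :=
  hL.obj₂_mem _ (ModuleCat.shortComplex_shortExact
    (ModuleCat.shortComplexOfCompEqZero f g hfg.linearMap_comp_eq_zero)
    hfg hf hg).singleTriangle_distinguished hM hP

lemma smod_mem_of_exact₃ (hM : smod R (.of R M) ∈ L) (hN : smod R (.of R N) ∈ L) :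
    smod R (.of R P) ∈ L :=
  hL.cone_mem _ (ModuleCat.shortComplex_shortExact
    (ModuleCat.shortComplexOfCompEqZero f g hfg.linearMap_comp_eq_zero)
    hfg hf hg).singleTriangle_distinguished hM hN

omit hf hfg hg

lemma smod_prod_mem (hM : smod R (.of R M) ∈ L) (hN : smod R (.of R N) ∈ L) :
    smod R (.of R (M × N)) ∈ L :=
  hL.smod_mem_of_exact₂ LinearMap.inl_injective .inl_snd LinearMap.snd_surjective hM hN

lemma smod_finsupp_mem (ι : Type u) (hM : smod R (.of R M) ∈ L) :
    smod R (.of R (ι →₀ M)) ∈ L :=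
  hL.coprod_mem _ _ (isColimitCofanMkObjOfIsColimit (singleFunctor _ 0) _ _
    (ModuleCat.finsuppCoconeIsColimit R M ι)) fun _ => hM

end Modules

end IsLocalizingSub

lemma isRegular_C_mul_X_sub_one {A : Type*} [CommRing A] (r : A) :
    IsRegular (Polynomial.C r * Polynomial.X - 1 : Polynomial A) :=
  isRegular_iff_mem_nonZeroDivisors.2 <|
    Polynomial.mem_nonzeroDivisors_of_coeff_mem 0 (by simp [isUnit_one.neg.mem_nonZeroDivisors])

namespace IsLocalizingSub

variable {R : Type u} [CommRing R] [HasDerivedCategory.{w'} (ModuleCat.{u} R)]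
  {L : Set (DerivedCategory (ModuleCat.{u} R))} (hL : IsLocalizingSub.{u} L)
include hL

section Algebras

variable {A B C D : Type u} [CommRing A] [CommRing B] [CommRing C] [CommRing D]
  [Algebra R A] [Algebra R B] [Algebra R C] [Algebra R D]
  [Algebra A B] [Algebra A C] [Algebra A D]
  [IsScalarTower R A B] [IsScalarTower R A C] [IsScalarTower R A D]

lemma smod_polynomial_mem (hA : smod R (.of R A) ∈ L) : smod R (.of R (Polynomial A)) ∈ L :=
  hL.smod_mem_of_linearEquiv
    (((Finsupp.domLCongr Equiv.ulift).trans
      (Polynomial.basisMonomials A).repr.symm).restrictScalars R)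
    (hL.smod_finsupp_mem (ULift.{u} ℕ) hA)

lemma smod_mem_of_isLocalizationAway (r : A) [IsLocalization.Away r B]
    (hA : smod R (.of R A) ∈ L) : smod R (.of R B) ∈ L := by
  let q : Polynomial A := Polynomial.C r * Polynomial.X - 1
  have hPoly := hL.smod_polynomial_mem hA
  have exact_mk : Function.Exact (LinearMap.mulLeft R q)
      ((AdjoinRoot.mkₐ q).toLinearMap.restrictScalars R) := fun p =>
    AdjoinRoot.mk_eq_zero.trans (exists_congr fun _ => eq_comm)
  let e : AdjoinRoot q ≃ₐ[A] B := (Localization.awayEquivAdjoin r).symm.trans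
    (IsLocalization.algEquiv (Submonoid.powers r) _ B)
  exact hL.smod_mem_of_linearEquiv (e.toLinearEquiv.restrictScalars R)
    (hL.smod_mem_of_exact₃ (isRegular_C_mul_X_sub_one r).left exact_mk AdjoinRoot.mk_surjective
      hPoly hPoly)

variable (B C D) in
lemma smod_mem_of_isCoprime {x y : A} (hxy : IsCoprime x y) [IsLocalization.Away x B]
    [IsLocalization.Away y C] [IsLocalization.Away (x * y) D] (hB : smod R (.of R B) ∈ L)
    (hC : smod R (.of R C) ∈ L) (hD : smod R (.of R D) ∈ L) : smod R (.of R A) ∈ L := by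
  have hu : IsUnit (algebraMap A D x * algebraMap A D y) := by
    rw [← map_mul]
    exact IsLocalization.Away.algebraMap_isUnit _
  let b : B →ₐ[A] D :=
    IsLocalization.Away.liftAlgHom x (f := Algebra.ofId A D) (isUnit_of_mul_isUnit_left hu)
  let c : C →ₐ[A] D :=
    IsLocalization.Away.liftAlgHom y (f := Algebra.ofId A D) (isUnit_of_mul_isUnit_right hu)
  exact hL.smod_mem_of_exact₁
    (f := ((Algebra.linearMap A B).prod (Algebra.linearMap A C)).restrictScalars R)
    (g := (b.toLinearMap.coprod (-c.toLinearMap)).restrictScalars R)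
    (injective_algebraMap_prod_of_isCoprime B C hxy)
    (exact_algebraMap_prod_algHom_coprod_of_isCoprime b c hxy)
    (surjective_algHom_coprod_of_isCoprime b c hxy) (hL.smod_prod_mem hB hC) hD

end Algebras

section Away

variable {f g : R}

lemma smod_away_mem_iff (f : R) (B : Type u) [CommRing B] [Algebra R B]
    [IsLocalization.Away f B] :
    smod R (.of R (Localization.Away f)) ∈ L ↔ smod R (.of R B) ∈ L :=
  let e := (IsLocalization.algEquiv (Submonoid.powers f) (Localization.Away f) B).toLinearEquiv
  ⟨hL.smod_mem_of_linearEquiv e, hL.smod_mem_of_linearEquiv e.symm⟩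

lemma smod_away_mul_mem (r : R) (hf : smod R (.of R (Localization.Away f)) ∈ L) :
    smod R (.of R (Localization.Away (f * r))) ∈ L := by
  rw [hL.smod_away_mem_iff (f * r) (Localization.Away (algebraMap R (Localization.Away f) r))]
  exact hL.smod_mem_of_isLocalizationAway (algebraMap R (Localization.Away f) r) hf

lemma smod_away_algebraMap_mem (s : R) (hf : smod R (.of R (Localization.Away f)) ∈ L) :
    smod R (.of R (Localization.Away (algebraMap R (Localization.Away s) f))) ∈ L := by
  rw [← hL.smod_away_mem_iff (s * f), mul_comm]
  exact hL.smod_away_mul_mem s hf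

lemma smod_away_add_mem (hf : smod R (.of R (Localization.Away f)) ∈ L)
    (hg : smod R (.of R (Localization.Away g)) ∈ L) :
    smod R (.of R (Localization.Away (f + g))) ∈ L := by
  let φ := algebraMap R (Localization.Away (f + g))
  have hcop : IsCoprime (φ f) (φ g) := by
    obtain ⟨s, hs⟩ := (IsLocalization.Away.algebraMap_isUnit (S := Localization.Away (f + g))
      (f + g)).exists_left_inv
    exact ⟨s, s, by rw [← mul_add, ← map_add, hs]⟩
  have hfg := hL.smod_away_algebraMap_mem (f + g) (hL.smod_away_mul_mem g hf)
  rw [map_mul] at hfg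
  exact hL.smod_mem_of_isCoprime (Localization.Away (φ f)) (Localization.Away (φ g))
    (Localization.Away (φ f * φ g)) hcop (hL.smod_away_algebraMap_mem _ hf)
    (hL.smod_away_algebraMap_mem _ hg) hfg

lemma smod_away_zero_mem : smod R (.of R (Localization.Away (0 : R))) ∈ L :=
  have : Subsingleton (Localization.Away (0 : R)) :=
    IsLocalization.subsingleton (M := Submonoid.powers (0 : R)) (Submonoid.mem_powers 0)
  hL.smod_mem_of_subsingleton

lemma smod_away_mem_of_pow {n : ℕ} (hf : smod R (.of R (Localization.Away (f ^ n))) ∈ L) :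
    smod R (.of R (Localization.Away f)) ∈ L := by
  have : IsLocalization.Away (f ^ n * f) (Localization.Away f) := by
    refine IsLocalization.Away.mul_of_isUnit' _ _ ?_
    rw [map_pow]
    exact IsLocalization.Away.algebraMap_pow_isUnit f n
  exact (hL.smod_away_mem_iff (f ^ n * f) _).1 (hL.smod_away_mul_mem f hf)

/-- The ideal of all `f` such that the localization `R_f` belongs to a given localizing
subcategory of `D(R)`. -/
def awayIdeal : Ideal R where
  carrier := {f | smod R (.of R (Localization.Away f)) ∈ L}
  zero_mem' := hL.smod_away_zero_mem
  add_mem' := hL.smod_away_add_mem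
  smul_mem' r f hf := by
    rw [smul_eq_mul, mul_comm]
    exact hL.smod_away_mul_mem r hf

lemma isRadical_awayIdeal : hL.awayIdeal.IsRadical := fun _ ⟨_, hn⟩ => hL.smod_away_mem_of_pow hn

lemma locS_subset_iff {S : Set R} : locS R S ⊆ L ↔ S ⊆ hL.awayIdeal :=
  hL.Loc_subset_iff.trans
    ⟨fun h _ hf => h ⟨_, hf, rfl⟩, by rintro h _ ⟨f, hf, rfl⟩; exact h hf⟩

end Away

end IsLocalizingSub

section LocS

open DerivedCategory

variable {R : Type u} [CommRing R] [HasDerivedCategory.{w'} (ModuleCat.{u} R)]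

lemma isIso_smul_id_smod_away (r : R) :
    IsIso (r • 𝟙 (smod R (.of R (Localization.Away r)))) := by
  let A := ModuleCat.of R (Localization.Away r)
  have hr : Function.Bijective (r • 𝟙 A) := (Module.End.isUnit_iff _).1 <|
    IsLocalizedModule.map_units (Algebra.linearMap R (Localization.Away r))
      (⟨r, Submonoid.mem_powers r⟩ : Submonoid.powers r)
  have : IsIso (r • 𝟙 A) := (ConcreteCategory.isIso_iff_bijective _).2 hr
  change IsIso (r • 𝟙 ((singleFunctor (ModuleCat.{u} R) 0).obj A))
  rw [← CategoryTheory.Functor.map_id, ← Functor.map_smul]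
  infer_instance

lemma locS_subset_leftOrthogonal (S : Set R) :
    locS R S ⊆ {X | (annihilatedBy (DerivedCategory (ModuleCat.{u} R)) S).leftOrthogonal X} := by
  refine (isLocalizingSub_leftOrthogonal _).Loc_subset_iff.2 ?_
  rintro _ ⟨r, hr, rfl⟩ Y φ hY
  have := isIso_smul_id_smod_away r
  exact eq_zero_of_isIso_smul_id r (hY r hr) φ

lemma mem_radical_span_of_smod_away_mem_locS {S : Set R} {f : R}
    (hf : smod R (.of R (Localization.Away f)) ∈ locS R S) : f ∈ (Ideal.span S).radical := by
  let A := Localization.Away f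
  let I := (Ideal.span S).map (algebraMap R A)
  let q : ModuleCat.of R A ⟶ .of R (A ⧸ I) := ModuleCat.ofHom (Ideal.Quotient.mkₐ R I).toLinearMap
  have hq : q = 0 := (singleFunctor (ModuleCat.{u} R) 0).map_injective <|
    (locS_subset_leftOrthogonal S hf _
      ((annihilatedBy_quotient_map_span S A).map (singleFunctor _ 0))).trans
      (Functor.map_zero _ _ _).symm
  have hI : I = ⊤ := (Ideal.eq_top_iff_one I).2 <|
    Ideal.Quotient.eq_zero_iff_mem.1 (ConcreteCategory.congr_hom hq (1 : A))
  obtain ⟨_, ⟨n, rfl⟩, hn⟩ := Set.not_disjoint_iff.1 fun h =>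
    (IsLocalization.map_algebraMap_ne_top_iff_disjoint (Submonoid.powers f) A _).2 h hI
  exact ⟨n, hn⟩

variable (R) in
lemma isLocalizingSub_locS (S : Set R) : IsLocalizingSub.{u} (locS R S) :=
  isLocalizingSub_Loc _

lemma awayIdeal_locS (S : Set R) :
    (isLocalizingSub_locS R S).awayIdeal = (Ideal.span S).radical := by
  refine le_antisymm (fun _ => mem_radical_span_of_smod_away_mem_locS) ?_
  rw [(isLocalizingSub_locS R S).isRadical_awayIdeal.radical_le_iff, Ideal.span_le,
    ← IsLocalizingSub.locS_subset_iff]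

lemma locS_subset_locS_iff {S S' : Set R} :
    locS R S ⊆ locS R S' ↔ (Ideal.span S).radical ≤ (Ideal.span S').radical := by
  rw [(isLocalizingSub_locS R S').locS_subset_iff, awayIdeal_locS,
    (Ideal.radical_isRadical _).radical_le_iff, Ideal.span_le]

lemma locS_eq_locS_iff {S S' : Set R} :
    locS R S = locS R S' ↔ (Ideal.span S).radical = (Ideal.span S').radical := by
  rw [Set.Subset.antisymm_iff, locS_subset_locS_iff, locS_subset_locS_iff, le_antisymm_iff]

lemma exists_finite_locS_eq_iff {S : Set R} :
    (∃ S' : Set R, S'.Finite ∧ locS R S = locS R S') ↔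
      ∃ J : Ideal R, J.FG ∧ (Ideal.span S).radical = J.radical := by
  simp only [locS_eq_locS_iff]
  constructor
  · rintro ⟨S', hS', h⟩
    exact ⟨Ideal.span S', Submodule.fg_span hS', h⟩
  · rintro ⟨_, ⟨s, rfl⟩, h⟩
    exact ⟨s, s.finite_toSet, h⟩

variable (R) in
/-- `L ↦ {f | R_f ∈ L}` and `I ↦ locS R I`, as mutually inverse order isomorphisms. -/
noncomputable def locSOrderIso :
    {L : Set (DerivedCategory (ModuleCat.{u} R)) // ∃ S : Set R, L = locS R S} ≃o
      {I : Ideal R // I.radical = I} where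
  toFun L :=
    have hL : IsLocalizingSub.{u} L.1 := by
      obtain ⟨_, S, rfl⟩ := L
      exact isLocalizingSub_locS R S
    ⟨hL.awayIdeal, hL.isRadical_awayIdeal.radical⟩
  invFun I := ⟨locS R I.1, I.1, rfl⟩
  left_inv := by
    rintro ⟨_, S, rfl⟩
    simp only [awayIdeal_locS, Subtype.mk.injEq, locS_eq_locS_iff, Ideal.span_eq,
      Ideal.radical_idem]
  right_inv I := Subtype.ext <| by
    simp only [awayIdeal_locS, Ideal.span_eq, I.2]
  map_rel_iff' := by
    rintro ⟨_, S, rfl⟩ ⟨_, S', rfl⟩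
    simp only [Equiv.coe_fn_mk, Subtype.mk_le_mk, awayIdeal_locS]
    exact locS_subset_locS_iff.symm

end LocS

section Statement15

variable (R : Type u) [CommRing R] [HasDerivedCategory.{w'} (ModuleCat.{u} R)]

/-- Theorem: `Loc({R_f : f ∈ J}) ↦ √⟨J⟩` and `I ↦ Loc({R_f : f ∈ I})` are mutually
inverse, inclusion-preserving order isomorphisms between the poset of localizing
subcategories of `D(R)` generated by sets of localizations of `R` and the frame
of radical ideals of `R`; moreover this isomorphism restricts to the
subcategories generated by finitely many localizations and the radicals of
finitely generated ideals. -/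
theorem rfgLoc_orderIso_radicalIdeals :
    ∃ e : {L : Set (DerivedCategory (ModuleCat.{u} R)) //
            ∃ S : Set R, L = locS R S} ≃o
          {I : Ideal R // I.radical = I},
      (∀ S : Set R, (e ⟨locS R S, ⟨S, rfl⟩⟩).1 = (Ideal.span S).radical) ∧
      (∀ (I : Ideal R) (hI : I.radical = I),
        (e.symm ⟨I, hI⟩).1 = locS R (I : Set R)) ∧
      (∀ (L : Set (DerivedCategory (ModuleCat.{u} R)))
          (hL : ∃ S : Set R, L = locS R S),
        ((∃ S : Set R, S.Finite ∧ L = locS R S) ↔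
          ∃ J : Ideal R, J.FG ∧ (e ⟨L, hL⟩).1 = J.radical)) := by
  refine ⟨locSOrderIso R, awayIdeal_locS, fun _ _ => rfl, ?_⟩
  rintro _ ⟨S, rfl⟩
  have hS : (locSOrderIso R ⟨locS R S, S, rfl⟩).1 = (Ideal.span S).radical := awayIdeal_locS S
  rw [hS]
  exact exists_finite_locS_eq_iff

end Statement15
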